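/- Let M be a multiset of nq points in AG(2,q), with q = p^h, p prime, and h > 1. If M is not the union of n (not necessarily distinct) lines (i.e., M is not equal, as a multiset, to a sum of n multisets each consisting of all q points of an affine line with multiplicity one), then the number k of special directions of M satisfies k ≥ p/n + 1, i.e., (k − 1)·n ≥ p. -/

import Mathlib

/-!
Since `|M| = nq`, a direction is special exactly when some line of that direction does not contain
exactly `n` points. Let `k` be the number of special directions, `m P` the multiplicity of `P` in
`M`, and `w_d P` the number of points on the line of direction `d` through `P`. Counting the points
of `M` along the `q + 1` lines through `P` gives (`special_sum`)
`∑_{d special} w_d P + n = k n + q * m P`.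

Suppose `(k - 1) n < p` and `n > 0`. Then some line has all of its points in `M` (`exists_line`).
If `k = 0`, the identity says `q * m P = n > 0` for every `P`, so any line will do. Otherwise
`k ≤ p`; take `P ∈ M`. The identity gives `∑ w_d P ≥ q ≥ p²`, so some special `d` has `w_d P ≥ p`.
For each `Q` on that line the sum `∑ w_d Q` is at least `p > (k - 1) n`, whence `m Q > 0`.

Removing this line leaves a multiset of `(n - 1) q` points whose special directions are among the
old ones, except that the first one may be created when `k = 0`; so `k - 1`, truncated at zero,
does not grow, and induction on `n` writes `M` as a sum of `n` lines.
-/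

attribute [local instance] Classical.propDecidable

noncomputable section

open Polynomial

variable {F : Type} [Field F]

/-- Point `P` of `AG(2,q)` lies on the line with slope `d` (`none` stands for slope `∞`)
and parameter `b`. -/
def onAffLine (d : Option F) (b : F) (P : F × F) : Prop :=
  match d with
  | some m => P.2 = m * P.1 + b
  | none => P.1 + b = 0

/-- Number of points of the multiset `M` (counted with multiplicity) on the line with
slope `d` and parameter `b`. -/
def lineCount (M : Multiset (F × F)) (d : Option F) (b : F) : ℕ :=
  Multiset.countP (onAffLine d b) M

/-- `d` is a mod-special direction of `M` (w.r.t. the prime `p`). -/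
def IsModSpecial (p : ℕ) (M : Multiset (F × F)) (d : Option F) : Prop :=
  ¬ ∀ b₁ b₂ : F, (lineCount M d b₁ : ZMod p) = (lineCount M d b₂ : ZMod p)

/-- `d` is a special direction of `M`: some line with slope `d` contains neither
`⌊|M|/q⌋` nor `⌈|M|/q⌉` points of `M`. -/
def IsSpecial [Fintype F] (M : Multiset (F × F)) (d : Option F) : Prop :=
  ¬ ∀ b : F, lineCount M d b = Multiset.card M / Fintype.card F ∨
      lineCount M d b = (Multiset.card M + Fintype.card F - 1) / Fintype.card F

/-- The multiset of the `q` points of an affine line, each with multiplicity one. -/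
def affLine [Fintype F] (d : Option F) (b : F) : Multiset (F × F) :=
  (Finset.univ.filter (onAffLine d b)).val

/-- The projection function of `M` from direction `d`: the unique polynomial of degree
at most `q - 1` whose value at each `b` is the number of points of `M` on the
corresponding line reduced modulo `p` (viewed in the prime subfield of `F`). -/
def prPoly [Fintype F] (M : Multiset (F × F)) (d : Option F) : F[X] :=
  Lagrange.interpolate Finset.univ id (fun b => (lineCount M d b : F))

/-- The parameter of the unique line with slope `d` through `P`. -/
def par {F : Type} [Field F] (d : Option F) (P : F × F) : F :=
  match d with
  | some m => P.2 - m * P.1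
  | none => - P.1

theorem onAffLine_iff {F : Type} [Field F] (d : Option F) (b : F) (P : F × F) :
    onAffLine d b P ↔ b = par d P := by
  cases d with
  | none => simp only [onAffLine, par]; constructor <;> intro h <;> linear_combination h
  | some m =>
    simp only [onAffLine, par]; constructor <;> intro h <;> linear_combination -h

theorem card_common {F : Type} [Field F] [Fintype F] (P Q : F × F) :
    (Finset.univ.filter (fun d : Option F => onAffLine d (par d P) Q)).card
      = 1 + if P = Q then Fintype.card F else 0 := by
  simp only [onAffLine_iff]
  split_ifs with h
  · subst h
    simp [Fintype.card_option, add_comm]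
  · rw [add_zero, Finset.card_eq_one]
    obtain ⟨a, b⟩ := P
    obtain ⟨c, e⟩ := Q
    by_cases hac : a = c
    · refine ⟨none, ?_⟩
      ext d
      cases d with
      | none => simp [par, hac]
      | some m =>
        simp only [par, hac, Finset.mem_filter, Finset.mem_univ, true_and, Finset.mem_singleton,
          reduceCtorEq, iff_false]
        intro hbe
        exact h (by rw [hac, sub_left_injective hbe])
    · have hac' : a - c ≠ 0 := sub_ne_zero.mpr hac
      refine ⟨some ((b - e) / (a - c)), ?_⟩
      ext d
      rw [Finset.mem_filter, Finset.mem_singleton]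
      cases d with
      | none => simp [par, hac]
      | some m =>
        simp only [par, Finset.mem_univ, true_and, Option.some.injEq, eq_div_iff hac']
        constructor <;> intro h <;> linear_combination -h

/-- Double counting of `M` along the pencil of the `q + 1` lines through `P`. -/
theorem pencil_sum {F : Type} [Field F] [Fintype F] (M : Multiset (F × F)) (P : F × F) :
    ∑ d : Option F, lineCount M d (par d P)
      = Multiset.card M + Fintype.card F * M.count P := by
  induction M using Multiset.induction_on with
  | empty => simp [lineCount]
  | cons Q M ih =>
    have hc := card_common P Q
    rw [Finset.card_filter] at hc
    simp only [lineCount, Multiset.countP_cons, Finset.sum_add_distrib] at ih ⊢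
    rw [ih, hc, Multiset.card_cons, Multiset.count_cons]
    split_ifs <;> ring

theorem card_affLine {F : Type} [Field F] [Fintype F] (d : Option F) (b : F) :
    Multiset.card (affLine d b) = Fintype.card F := by
  change (Finset.univ.filter (onAffLine d b)).card = _
  rw [← Finset.card_univ]
  symm
  cases d with
  | none =>
    refine Finset.card_bij (fun y _ => (-b, y)) ?_ ?_ ?_
    · intro y _; simp [onAffLine]
    · intro y _ z _ h; simpa using h
    · rintro ⟨x, y⟩ h
      simp only [onAffLine, Finset.mem_filter, Finset.mem_univ, true_and] at h
      exact ⟨y, Finset.mem_univ _, by rw [eq_neg_of_add_eq_zero_left h]⟩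
  | some m =>
    refine Finset.card_bij (fun x _ => (x, m * x + b)) ?_ ?_ ?_
    · intro y _; simp [onAffLine]
    · intro y _ z _ h; exact (Prod.ext_iff.mp h).1
    · rintro ⟨x, y⟩ h
      simp only [onAffLine, Finset.mem_filter, Finset.mem_univ, true_and] at h
      exact ⟨x, Finset.mem_univ _, by rw [h]⟩

/-- Lines with different slopes meet in exactly one point. -/
theorem lineCount_affLine {F : Type} [Field F] [Fintype F] (d e : Option F) (b c : F)
    (hde : e ≠ d) : lineCount (affLine d b) e c = 1 := by
  rw [lineCount, Multiset.countP_eq_card_filter]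
  change ((Finset.univ.filter (onAffLine d b)).filter (onAffLine e c)).card = 1
  rw [Finset.filter_filter, Finset.card_eq_one]
  cases d with
  | none =>
    cases e with
    | none => exact absurd rfl hde
    | some m =>
      refine ⟨(-b, m * (-b) + c), ?_⟩
      ext ⟨x, y⟩
      rw [Finset.mem_filter, Finset.mem_singleton]
      simp only [onAffLine, Finset.mem_univ, true_and, Prod.mk.injEq]
      constructor
      · rintro ⟨h1, h2⟩
        have hx : x = -b := eq_neg_of_add_eq_zero_left h1
        exact ⟨hx, by rw [h2, hx]⟩
      · rintro ⟨rfl, rfl⟩; simp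
  | some l =>
    cases e with
    | none =>
      refine ⟨(-c, l * (-c) + b), ?_⟩
      ext ⟨x, y⟩
      rw [Finset.mem_filter, Finset.mem_singleton]
      simp only [onAffLine, Finset.mem_univ, true_and, Prod.mk.injEq]
      constructor
      · rintro ⟨h1, h2⟩
        have hx : x = -c := eq_neg_of_add_eq_zero_left h2
        exact ⟨hx, by rw [h1, hx]⟩
      · rintro ⟨rfl, rfl⟩; simp
    | some m =>
      have hml : m - l ≠ 0 := sub_ne_zero.mpr (fun h => hde (by rw [h]))
      refine ⟨((b - c) / (m - l), l * ((b - c) / (m - l)) + b), ?_⟩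
      ext ⟨x, y⟩
      rw [Finset.mem_filter, Finset.mem_singleton]
      simp only [onAffLine, Finset.mem_univ, true_and, Prod.mk.injEq]
      constructor
      · rintro ⟨h1, h2⟩
        have hx : x = (b - c) / (m - l) := by
          rw [eq_div_iff hml]; linear_combination h1 - h2
        exact ⟨hx, by rw [h1, hx]⟩
      · rintro ⟨rfl, rfl⟩
        refine ⟨rfl, ?_⟩
        field_simp
        ring

theorem isSpecial_iff {F : Type} [Field F] [Fintype F] (n : ℕ) (M : Multiset (F × F))
    (hM : Multiset.card M = n * Fintype.card F) (d : Option F) :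
    IsSpecial M d ↔ ¬ ∀ b : F, lineCount M d b = n := by
  have hq : 0 < Fintype.card F := Fintype.card_pos
  have h1 : Multiset.card M / Fintype.card F = n := by rw [hM, Nat.mul_div_cancel _ hq]
  have h2 : (Multiset.card M + Fintype.card F - 1) / Fintype.card F = n := by
    rw [hM, Nat.add_sub_assoc hq, mul_comm, Nat.mul_add_div hq, Nat.div_eq_of_lt (by omega),
      add_zero]
  rw [IsSpecial, h1, h2]
  simp only [or_self]

/-- The pencil count with the non-special directions, which contribute `n` each, cancelled. -/
theorem special_sum {F : Type} [Field F] [Fintype F] (n : ℕ) (M : Multiset (F × F))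
    (hM : Multiset.card M = n * Fintype.card F) (P : F × F) :
    ∑ d ∈ Finset.univ.filter (fun d : Option F => IsSpecial M d), lineCount M d (par d P) + n
      = (Finset.univ.filter (fun d : Option F => IsSpecial M d)).card * n
        + Fintype.card F * M.count P := by
  have h := pencil_sum M P
  rw [← Finset.sum_filter_add_sum_filter_not Finset.univ (fun d : Option F => IsSpecial M d)] at h
  have h2 : ∑ d ∈ Finset.univ.filter (fun d : Option F => ¬ IsSpecial M d),
      lineCount M d (par d P)
      = (Finset.univ.filter (fun d : Option F => ¬ IsSpecial M d)).card * n := by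
    apply Finset.sum_const_nat
    intro d hd
    have hd' := (Finset.mem_filter.mp hd).2
    rw [isSpecial_iff n M hM, not_not] at hd'
    exact hd' _
  have h3 := Finset.card_filter_add_card_filter_not (s := Finset.univ)
    (fun d : Option F => IsSpecial M d)
  rw [Finset.card_univ, Fintype.card_option] at h3
  have h4 := congrArg (· * n) h3
  simp only [add_mul, one_mul] at h4
  rw [h2, hM] at h
  have h5 := mul_comm n (Fintype.card F)
  omega

/-- Few special directions force a whole line into the support of `M`; its direction is special
unless there are no special directions at all. -/
theorem exists_line (p h n : ℕ) [Fact p.Prime] (hh : 1 < h) (hn : 0 < n)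
    {F : Type} [Field F] [Fintype F] (hcard : Fintype.card F = p ^ h)
    (M : Multiset (F × F)) (hM : Multiset.card M = n * Fintype.card F)
    (hk : ((Finset.univ.filter (fun d : Option F => IsSpecial M d)).card - 1) * n < p) :
    ∃ (d : Option F) (b : F), (∀ Q, onAffLine d b Q → Q ∈ M) ∧
      (IsSpecial M d ∨ (Finset.univ.filter (fun d : Option F => IsSpecial M d)).card = 0) := by
  have hp : 0 < p := (Fact.out : p.Prime).pos
  have hq : 0 < Fintype.card F := Fintype.card_pos
  have hsum := special_sum n M hM
  generalize hS : Finset.univ.filter (fun d : Option F => IsSpecial M d) = S at *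
  rcases Nat.eq_zero_or_pos S.card with h0 | h0
  · refine ⟨none, 0, fun Q _ => ?_, Or.inr h0⟩
    have := hsum Q
    rw [Finset.card_eq_zero.mp h0] at this
    rw [← Multiset.count_pos]
    by_contra hc
    have hc' : M.count Q = 0 := by omega
    simp [hc'] at this
    omega
  · obtain ⟨k, hkS⟩ : ∃ k, S.card = k + 1 := ⟨S.card - 1, by omega⟩
    rw [hkS] at hk hsum
    simp only [Nat.add_sub_cancel] at hk
    have hkp : k + 1 ≤ p := by nlinarith
    obtain ⟨P, hP⟩ : ∃ P, P ∈ M := by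
      apply Multiset.card_pos_iff_exists_mem.mp
      rw [hM]; positivity
    have hqp : p * p ≤ Fintype.card F := by
      rw [hcard, ← sq]; exact Nat.pow_le_pow_right hp hh
    obtain ⟨d, hd, hdp⟩ : ∃ d ∈ S, p ≤ lineCount M d (par d P) := by
      by_contra! hcon
      have h1 : ∑ d ∈ S, lineCount M d (par d P) < ∑ d ∈ S, p :=
        Finset.sum_lt_sum_of_nonempty (Finset.card_pos.mp h0) hcon
      rw [Finset.sum_const, hkS, smul_eq_mul] at h1
      have h2 := hsum P
      have h3 : Fintype.card F ≤ Fintype.card F * M.count P :=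
        Nat.le_mul_of_pos_right _ (Multiset.count_pos.mpr hP)
      have h4 : (k + 1) * p ≤ p * p := Nat.mul_le_mul_right _ hkp
      have h5 : n ≤ (k + 1) * n := Nat.le_mul_of_pos_left _ (by omega)
      omega
    refine ⟨d, par d P, fun Q hQ => ?_, Or.inl ?_⟩
    · rw [onAffLine_iff] at hQ
      rw [hQ] at hdp
      have h1 := Finset.single_le_sum (f := fun d => lineCount M d (par d Q))
        (fun _ _ => Nat.zero_le _) hd
      have h2 := hsum Q
      rw [← Multiset.count_pos]
      by_contra hc
      have hc' : M.count Q = 0 := by omega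
      rw [hc', mul_zero, add_zero, add_mul, one_mul] at h2
      omega
    · rw [← hS] at hd
      exact (Finset.mem_filter.mp hd).2

theorem lines_of_few_special (p h : ℕ) [Fact p.Prime] (hh : 1 < h)
    {F : Type} [Field F] [Fintype F] (hcard : Fintype.card F = p ^ h) (n : ℕ) :
    ∀ M : Multiset (F × F), Multiset.card M = n * Fintype.card F →
    ((Finset.univ.filter (fun d : Option F => IsSpecial M d)).card - 1) * n < p →
    ∃ L : Multiset (Option F × F), Multiset.card L = n ∧
        M = (L.map (fun l => affLine l.1 l.2)).sum := by
  induction n with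
  | zero =>
    intro M hM _
    rw [zero_mul, Multiset.card_eq_zero] at hM
    exact ⟨0, by simp, by simp [hM]⟩
  | succ n ih =>
    intro M hM hk
    obtain ⟨d, b, hsub, hd⟩ := exists_line p h (n + 1) hh (Nat.succ_pos n) hcard M hM hk
    have hle : affLine d b ≤ M := by
      rw [affLine, Finset.val_le_iff_val_subset]
      intro Q hQ
      exact hsub Q (Finset.mem_filter.mp (Finset.mem_val.mp hQ)).2
    obtain ⟨M', rfl⟩ := Multiset.le_iff_exists_add.mp hle
    have hM' : Multiset.card M' = n * Fintype.card F := by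
      rw [Multiset.card_add, card_affLine, add_mul] at hM
      omega
    have hsubset : Finset.univ.filter (fun e : Option F => IsSpecial M' e) ⊆
        insert d (Finset.univ.filter (fun e : Option F => IsSpecial (affLine d b + M') e)) := by
      intro e he
      rw [Finset.mem_insert]
      by_cases hed : e = d
      · exact Or.inl hed
      right
      rw [Finset.mem_filter, isSpecial_iff n M' hM'] at he
      rw [Finset.mem_filter, isSpecial_iff (n + 1) _ hM]
      refine ⟨Finset.mem_univ _, fun hall => he.2 fun c => ?_⟩
      have h1 := hall c
      have h2 := lineCount_affLine d e b c hed
      rw [lineCount] at h1 h2 ⊢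
      rw [Multiset.countP_add, h2] at h1
      omega
    have hcardle := Finset.card_le_card hsubset
    -- In both cases `k - 1`, truncated at zero, has not increased.
    have hk' : (Finset.univ.filter (fun e : Option F => IsSpecial M' e)).card - 1 ≤
        (Finset.univ.filter (fun e : Option F => IsSpecial (affLine d b + M') e)).card - 1 := by
      rcases hd with hd | hd
      · have hmem : d ∈ Finset.univ.filter
            (fun e : Option F => IsSpecial (affLine d b + M') e) :=
          Finset.mem_filter.mpr ⟨Finset.mem_univ _, hd⟩
        rw [Finset.insert_eq_of_mem hmem] at hcardle
        omega
      · have := Finset.card_insert_le d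
          (Finset.univ.filter (fun e : Option F => IsSpecial (affLine d b + M') e))
        omega
    obtain ⟨L, hL, hLM⟩ := ih M' hM'
      (lt_of_le_of_lt (Nat.mul_le_mul hk' (Nat.le_succ n)) hk)
    exact ⟨(d, b) ::ₘ L, by simp [hL], by simp [← hLM]⟩

theorem stmt2 (p h n : ℕ) [Fact p.Prime] (hh : 1 < h)
    (F : Type) [Field F] [Fintype F] [CharP F p] (hcard : Fintype.card F = p ^ h)
    (M : Multiset (F × F)) (hM : Multiset.card M = n * Fintype.card F)
    (hnl : ¬ ∃ L : Multiset (Option F × F), Multiset.card L = n ∧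
        M = (L.map (fun l => affLine l.1 l.2)).sum) :
    p ≤ ((Finset.univ.filter (fun d : Option F => IsSpecial M d)).card - 1) * n := by
  by_contra hlt
  exact hnl (lines_of_few_special p h hh hcard n M hM (not_le.mp hlt))

end
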